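/- Let P be a polytope in ℝ^k whose vertices lie in ℤ^k. Then there exist a constant N and a polynomial p such that for all integers n ≥ N, the number of lattice points i(P,n) = |nP ∩ ℤ^k| equals p(n). -/

import Mathlib

open Pointwise

/-- A real sequence which eventually agrees with a polynomial. -/
def EvPoly (f : ℕ → ℝ) : Prop :=
  ∃ (N : ℕ) (p : Polynomial ℝ), ∀ n : ℕ, N ≤ n → f n = p.eval (n : ℝ)

lemma EvPoly.congr {f g : ℕ → ℝ} (hf : EvPoly f) (N : ℕ) (h : ∀ n, N ≤ n → g n = f n) :
    EvPoly g := by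
  obtain ⟨M, p, hp⟩ := hf
  exact ⟨max N M, p, fun n hn => by
    rw [h n (le_trans (le_max_left _ _) hn), hp n (le_trans (le_max_right _ _) hn)]⟩

lemma EvPoly.add {f g : ℕ → ℝ} (hf : EvPoly f) (hg : EvPoly g) :
    EvPoly (fun n => f n + g n) := by
  obtain ⟨M, p, hp⟩ := hf
  obtain ⟨N, q, hq⟩ := hg
  exact ⟨max M N, p + q, fun n hn => by
    simp [hp n (le_trans (le_max_left _ _) hn), hq n (le_trans (le_max_right _ _) hn)]⟩

lemma EvPoly.const (c : ℝ) : EvPoly (fun _ => c) := ⟨0, Polynomial.C c, fun n _ => by simp⟩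

lemma EvPoly.sum {ι : Type*} (s : Finset ι) {f : ι → ℕ → ℝ} (hf : ∀ i ∈ s, EvPoly (f i)) :
    EvPoly (fun n => ∑ i ∈ s, f i n) := by
  classical
  induction s using Finset.induction_on with
  | empty => simpa using EvPoly.const 0
  | insert a s ha ih =>
    simp only [Finset.sum_insert ha]
    exact (hf a (by simp)).add (ih fun i hi => hf i (by simp [hi]))

lemma EvPoly.shift {f : ℕ → ℝ} (hf : EvPoly f) (j : ℕ) : EvPoly (fun n => f (n - j)) := by
  obtain ⟨M, p, hp⟩ := hf
  refine ⟨M + j, p.comp (Polynomial.X - Polynomial.C (j : ℝ)), fun n hn => ?_⟩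
  beta_reduce
  rw [hp (n - j) (by omega), Nat.cast_sub (by omega)]
  simp

lemma exists_sum_poly (p : Polynomial ℝ) :
    ∃ q : Polynomial ℝ, ∀ n : ℕ, ∑ i ∈ Finset.range n, p.eval (i : ℝ) = q.eval (n : ℝ) := by
  induction p using Polynomial.induction_on' with
  | add p q hp hq =>
    obtain ⟨P, hP⟩ := hp
    obtain ⟨Q, hQ⟩ := hq
    exact ⟨P + Q, fun n => by simp [Finset.sum_add_distrib, hP, hQ]⟩
  | monomial d a =>
    refine ⟨Polynomial.C a * ∑ i ∈ Finset.range (d + 1),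
      Polynomial.C (((bernoulli i * ((d + 1).choose i) / (d + 1) : ℚ)) : ℝ) *
        Polynomial.X ^ (d + 1 - i), fun n => ?_⟩
    have h := congrArg (fun x : ℚ => (x : ℝ)) (sum_range_pow n d)
    push_cast at h
    simp only [Polynomial.eval_monomial, ← Finset.mul_sum, h, Polynomial.eval_mul,
      Polynomial.eval_C, Polynomial.eval_finsetSum, Polynomial.eval_pow, Polynomial.eval_X]
    congr 1
    refine Finset.sum_congr rfl fun i _ => ?_
    push_cast
    ring

lemma EvPoly.partialSum {f : ℕ → ℝ} (hf : EvPoly f) :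
    EvPoly (fun n => ∑ i ∈ Finset.range (n + 1), f i) := by
  obtain ⟨M, p, hp⟩ := hf
  obtain ⟨q, hq⟩ := exists_sum_poly p
  refine ⟨M, q.comp (Polynomial.X + 1) + Polynomial.C (∑ i ∈ Finset.range M, f i
    - ∑ i ∈ Finset.range M, p.eval (i : ℝ)), fun n hn => ?_⟩
  have h1 := Finset.sum_range_add_sum_Ico f (show M ≤ n + 1 by omega)
  have h2 := Finset.sum_range_add_sum_Ico (fun i : ℕ => p.eval (i : ℝ)) (show M ≤ n + 1 by omega)
  have h3 : ∑ i ∈ Finset.Ico M (n + 1), f i = ∑ i ∈ Finset.Ico M (n + 1), p.eval (i : ℝ) :=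
    Finset.sum_congr rfl fun i hi => hp i (Finset.mem_Ico.1 hi).1
  have h4 := hq (n + 1)
  push_cast at h4
  simp only [Polynomial.eval_add, Polynomial.eval_comp, Polynomial.eval_X, Polynomial.eval_one,
    Polynomial.eval_C, ← h4]
  linarith

/-- Descending chains of lower sets of `ℕ^d` stabilise. -/
lemma lower_stabilise {α : Type*} [Preorder α] [WellQuasiOrderedLE α] (L : ℕ → Set α)
    (hL : ∀ j, IsLowerSet (L j)) (hanti : Antitone L) : ∃ J, ∀ j, J ≤ j → L j = L J := by
  by_contra! h
  have h' : ∀ J, ∃ j x, J ≤ j ∧ x ∈ L J ∧ x ∉ L j := by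
    intro J
    obtain ⟨j, hj, hne⟩ := h J
    by_contra! h2
    exact hne (Set.Subset.antisymm (hanti hj) fun x hx => h2 j x hj hx)
  choose nx x hnx hx hx' using h'
  let s : ℕ → ℕ := fun i => nx^[i] 0
  have hs : ∀ i, s (i + 1) = nx (s i) := fun i => Function.iterate_succ_apply' nx i 0
  have hmono : Monotone s := monotone_nat_of_le_succ fun i => by rw [hs]; exact hnx _
  obtain ⟨m, n, hmn, hle⟩ := wellQuasiOrdered_le (fun i => x (s i))
  apply hx' (s m)
  rw [← hs]
  exact hL _ hle (hanti (hmono (Nat.succ_le_of_lt hmn)) (hx (s n)))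

open Classical in
/-- Number of elements of `L` of total degree `n`. -/
noncomputable def hilb {d : ℕ} (L : Set (Fin d → ℕ)) (n : ℕ) : ℕ :=
  ((Finset.Nat.antidiagonalTuple d n).filter (fun m => m ∈ L)).card

lemma hilb_succ {d : ℕ} (L : Set (Fin (d + 1) → ℕ)) (n : ℕ) :
    hilb L n = ∑ j ∈ Finset.range (n + 1),
      hilb {m : Fin d → ℕ | (Fin.cons j m : Fin (d + 1) → ℕ) ∈ L} (n - j) := by
  classical
  unfold hilb
  rw [Finset.card_eq_sum_card_fiberwise (f := fun m => m 0) (t := Finset.range (n + 1))]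
  · refine Finset.sum_congr rfl fun j hj => ?_
    have hj' : j ≤ n := by simpa [Nat.lt_succ_iff] using hj
    refine Finset.card_nbij' (fun m => Fin.tail m) (fun m => Fin.cons j m) ?_ ?_ ?_ ?_
    · intro m hm
      simp only [Finset.coe_filter, Finset.mem_filter, Finset.Nat.mem_antidiagonalTuple,
        Set.mem_ofPred_eq] at hm ⊢
      obtain ⟨⟨h1, h2⟩, h3⟩ := hm
      subst h3
      rw [Fin.sum_univ_succ] at h1
      refine ⟨?_, by rwa [Fin.cons_self_tail]⟩
      simp only [Fin.tail]
      omega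
    · intro m hm
      simp only [Finset.coe_filter, Finset.mem_filter, Finset.Nat.mem_antidiagonalTuple,
        Set.mem_ofPred_eq] at hm ⊢
      refine ⟨⟨?_, hm.2⟩, by simp⟩
      rw [Fin.sum_univ_succ]
      simp [hm.1, hj']
    · intro m hm
      simp only [Finset.coe_filter, Finset.mem_filter, Set.mem_ofPred_eq] at hm
      simp [← hm.2]
    · intro m hm
      simp
  · intro m hm
    simp only [Finset.coe_filter, Finset.Nat.mem_antidiagonalTuple,
        Set.mem_ofPred_eq] at hm
    have := Finset.single_le_sum (f := m) (s := Finset.univ) (fun _ _ => Nat.zero_le _)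
      (Finset.mem_univ 0)
    simp
    omega

lemma hilb_evPoly (d : ℕ) (L : Set (Fin d → ℕ)) (hL : IsLowerSet L) :
    EvPoly (fun n => (hilb L n : ℝ)) := by
  induction d with
  | zero =>
    refine (EvPoly.const 0).congr 1 fun n hn => ?_
    obtain ⟨n, rfl⟩ := Nat.exists_eq_add_of_le' hn
    simp [hilb]
  | succ d ih =>
    let S : ℕ → Set (Fin d → ℕ) := fun j => {m | (Fin.cons j m : Fin (d + 1) → ℕ) ∈ L}
    have hS : ∀ j, IsLowerSet (S j) := by
      intro j a b hab ha
      refine hL ?_ ha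
      exact Fin.cons_le_cons.2 ⟨le_rfl, hab⟩
    have hanti : Antitone S := by
      intro i j hij m hm
      refine hL ?_ hm
      exact Fin.cons_le_cons.2 ⟨hij, le_rfl⟩
    obtain ⟨J, hJ⟩ := lower_stabilise S hS hanti
    have key := (EvPoly.sum (Finset.range J) (f := fun j n => (hilb (S j) (n - j) : ℝ))
      fun j _ => (ih (S j) (hS j)).shift j).add ((ih (S J) (hS J)).partialSum.shift J)
    refine key.congr J fun n hn => ?_
    rw [hilb_succ]
    push_cast
    rw [← Finset.sum_range_add_sum_Ico _ (show J ≤ n + 1 by omega)]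
    congr 1
    have : ∀ i ∈ Finset.Ico J (n + 1), (hilb (S i) (n - i) : ℝ) = (hilb (S J) (n - i) : ℝ) := by
      intro i hi
      rw [hJ i (Finset.mem_Ico.1 hi).1]
    refine (Finset.sum_congr rfl this).trans ?_
    refine Finset.sum_nbij' (fun i => n - i) (fun i => n - i) ?_ ?_ ?_ ?_ ?_
    all_goals intro i hi
    all_goals simp only [Finset.mem_Ico, Finset.mem_range] at hi ⊢
    all_goals omega

/-- Counting the elements of a finitely generated graded module over the monoid `ℕ^d`. -/
lemma module_evPoly {M : Type*} [AddCommMonoid M] {d e : ℕ} (v : Fin d → M) (b : Fin e → M)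
    (r : Fin e → ℕ) (A : ℕ → Set M)
    (hA : ∀ n a, a ∈ A n ↔ ∃ (t : Fin e) (m : Fin d → ℕ),
      b t + ∑ j, m j • v j = a ∧ r t + ∑ j, m j = n) :
    EvPoly (fun n => ((A n).ncard : ℝ)) := by
  classical
  let φ : Fin e → (Fin d → ℕ) → M × ℕ := fun t m => (b t + ∑ j, m j • v j, r t + ∑ j, m j)
  have hφ : ∀ t m x, φ t (m + x) = φ t m + (∑ j, x j • v j, ∑ j, x j) := by
    intro t m x
    simp [φ, add_smul, Finset.sum_add_distrib, add_assoc]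
  let w : Fin e → (Fin d → ℕ) → Fin e ×ₗ Lex (Fin d → ℕ) := fun t m => toLex (t, toLex m)
  let L : Fin e → Set (Fin d → ℕ) := fun t => {m | ∀ t' m', φ t' m' = φ t m → w t m ≤ w t' m'}
  have hL : ∀ t, IsLowerSet (L t) := by
    intro t m' m hle hm' t'' m'' heq
    obtain ⟨x, rfl⟩ := exists_add_of_le hle
    have h1 := hm' t'' (m'' + x) (by rw [hφ, hφ, heq])
    simp only [w, Prod.Lex.toLex_le_toLex] at h1 ⊢
    refine h1.imp id fun h => ⟨h.1, ?_⟩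
    have h2 := h.2
    rw [toLex_add, toLex_add] at h2
    exact le_of_add_le_add_right h2
  have key := EvPoly.sum (Finset.univ : Finset (Fin e))
    (f := fun t n => (hilb (L t) (n - r t) : ℝ)) fun t _ => (hilb_evPoly d (L t) (hL t)).shift (r t)
  refine key.congr (∑ t, r t) fun n hn => ?_
  have hr : ∀ t, r t ≤ n := fun t =>
    (Finset.single_le_sum (f := r) (fun _ _ => Nat.zero_le _) (Finset.mem_univ t)).trans hn
  let F : Finset (Σ _ : Fin e, (Fin d → ℕ)) := Finset.univ.sigma fun t =>
    (Finset.Nat.antidiagonalTuple d (n - r t)).filter (fun m => m ∈ L t)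
  have hF : ∀ t m, (⟨t, m⟩ : Σ _ : Fin e, (Fin d → ℕ)) ∈ F ↔ r t + ∑ j, m j = n ∧ m ∈ L t := by
    intro t m
    have := hr t
    simp only [F, Finset.mem_sigma, Finset.mem_univ, true_and, Finset.mem_filter,
      Finset.Nat.mem_antidiagonalTuple]
    refine and_congr_left fun _ => ?_
    omega
  have himg : A n = ↑(F.image fun x => (φ x.1 x.2).1) := by
    ext a
    simp only [Finset.coe_image, Set.mem_image, Finset.mem_coe, hA]
    constructor
    · rintro ⟨t, m, h1, h2⟩
      let S : Set (Fin e ×ₗ Lex (Fin d → ℕ)) := {x | ∃ t m, x = w t m ∧ φ t m = (a, n)}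
      have hne : S.Nonempty := ⟨w t m, t, m, rfl, by simp [φ, h1, h2]⟩
      have hwf : WellFounded ((· < ·) : (Fin e ×ₗ Lex (Fin d → ℕ)) → _ → Prop) := wellFounded_lt
      obtain ⟨t0, m0, h3, h4⟩ := hwf.min_mem S hne
      refine ⟨⟨t0, m0⟩, ?_, by simp [h4]⟩
      rw [hF]
      refine ⟨congrArg Prod.snd h4, fun t' m' h5 => ?_⟩
      rw [← h3]
      exact not_lt.1 (hwf.not_lt_min S ⟨t', m', rfl, h5.trans h4⟩)
    · rintro ⟨⟨t, m⟩, h1, h2⟩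
      exact ⟨t, m, h2, ((hF t m).1 h1).1⟩
  rw [himg, Set.ncard_coe_finset, Finset.card_image_of_injOn, Finset.card_sigma]
  · simp only [hilb]
    push_cast
    congr!
  · rintro ⟨t, m⟩ h ⟨t', m'⟩ h' heq
    obtain ⟨h1, h2⟩ := (hF t m).1 h
    obtain ⟨h1', h2'⟩ := (hF t' m').1 h'
    have he : φ t m = φ t' m' := Prod.ext heq (h1.trans h1'.symm)
    have := le_antisymm (h2 t' m' he.symm) (h2' t m he)
    simp only [w, EmbeddingLike.apply_eq_iff_eq, Prod.mk.injEq] at this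
    obtain ⟨rfl, rfl⟩ := this
    rfl

/-- The lattice points of the dilations of a lattice polytope, in terms of coefficients. -/
lemma coeff_evPoly {k d : ℕ} (v : Fin d → Fin k → ℤ) (A : ℕ → Set (Fin k → ℤ))
    (hA : ∀ n a, a ∈ A n ↔ ∃ c : Fin d → ℝ, (∀ j, 0 ≤ c j) ∧ ∑ j, c j = n ∧
      ∀ i, ∑ j, c j * (v j i : ℝ) = a i) :
    EvPoly (fun n => ((A n).ncard : ℝ)) := by
  let F : Set ((Fin k → ℤ) × ℕ) := {x | ∃ c : Fin d → ℝ, (∀ j, 0 ≤ c j) ∧ (∀ j, c j ≤ 1) ∧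
    ∑ j, c j = x.2 ∧ ∀ i, ∑ j, c j * (v j i : ℝ) = x.1 i}
  have hfin : F.Finite := by
    refine ((Set.finite_Icc (fun i => - ∑ j, |v j i| : Fin k → ℤ)
      (fun i => ∑ j, |v j i|)).prod (Set.finite_Icc 0 d)).subset ?_
    rintro ⟨a, n⟩ ⟨c, h0, h1, h2, h3⟩
    have hb : ∀ i, |a i| ≤ ∑ j, |v j i| := by
      intro i
      have : |(a i : ℝ)| ≤ ∑ j, |(v j i : ℝ)| := by
        rw [← h3 i]
        refine (Finset.abs_sum_le_sum_abs _ _).trans (Finset.sum_le_sum fun j _ => ?_)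
        rw [abs_mul, abs_of_nonneg (h0 j)]
        exact mul_le_of_le_one_left (abs_nonneg _) (h1 j)
      exact_mod_cast this
    have hd : n ≤ d := by
      have : (n : ℝ) ≤ d := by
        rw [← h2]
        exact (Finset.sum_le_sum fun j _ => h1 j).trans (by simp)
      exact_mod_cast this
    exact ⟨⟨fun i => (abs_le.1 (hb i)).1, fun i => (abs_le.1 (hb i)).2⟩, ⟨Nat.zero_le _, hd⟩⟩
  have : Finite F := hfin
  obtain ⟨e, ⟨E⟩⟩ := Finite.exists_equiv_fin F
  refine module_evPoly v (fun t => (E.symm t).1.1) (fun t => (E.symm t).1.2) A fun n a => ?_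
  rw [hA]
  constructor
  · rintro ⟨c, h0, h1, h2⟩
    let m : Fin d → ℕ := fun j => ⌊c j⌋₊
    have hm : ∀ j, (m j : ℝ) ≤ c j := fun j => Nat.floor_le (h0 j)
    have hm' : ∀ j, c j < m j + 1 := fun j => Nat.lt_floor_add_one _
    have hmn : ∑ j, m j ≤ n := by
      have : ((∑ j, m j : ℕ) : ℝ) ≤ n := by
        rw [← h1]
        push_cast
        exact Finset.sum_le_sum fun j _ => hm j
      exact_mod_cast this
    have hmem : ((a - ∑ j, m j • v j, n - ∑ j, m j) : (Fin k → ℤ) × ℕ) ∈ F := by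
      refine ⟨fun j => c j - m j, fun j => sub_nonneg.2 (hm j),
        fun j => by linarith [hm' j], ?_, fun i => ?_⟩
      · simp only
        rw [Nat.cast_sub hmn, Finset.sum_sub_distrib, h1]
        push_cast
        rfl
      · simp [sub_mul, Finset.sum_sub_distrib, h2, Finset.sum_apply]
    refine ⟨E ⟨_, hmem⟩, m, ?_, ?_⟩
    · simp
    · simp only [Equiv.symm_apply_apply]
      omega
  · rintro ⟨t, m, h1, h2⟩
    obtain ⟨c, h0, -, h3, h4⟩ := (E.symm t).2
    refine ⟨fun j => c j + m j, fun j => add_nonneg (h0 j) (Nat.cast_nonneg _), ?_, fun i => ?_⟩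
    · rw [Finset.sum_add_distrib, h3, ← h2]
      push_cast
      rfl
    · rw [← h1]
      simp [add_mul, Finset.sum_add_distrib, h4, Finset.sum_apply]

/-- Ehrhart–Macdonald, eventual form. Let `P` be a polytope in
`ℝ^k` whose vertices lie in `ℤ^k` (formalized as the convex hull of a nonempty finite
set `V` of points with integer coordinates). Then there exist a constant `N` and a
polynomial `p` such that for all `n ≥ N`, the number of lattice points
`i(P,n) = |nP ∩ ℤ^k|` equals `p(n)`. -/
theorem card_lattice_points_of_dilated_polytope_eventually_polynomial
    {k : ℕ} (V : Finset (Fin k → ℝ)) (hVne : V.Nonempty)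
    (hV : ∀ v ∈ V, ∀ i, ∃ z : ℤ, v i = (z : ℝ)) :
    ∃ (N : ℕ) (p : Polynomial ℝ), ∀ n : ℕ, N ≤ n →
      (({a : Fin k → ℤ |
          (fun i => (a i : ℝ)) ∈ (n : ℝ) • convexHull ℝ (V : Set (Fin k → ℝ))}.ncard : ℝ))
        = p.eval (n : ℝ) := by
  classical
  let E := V.equivFin
  choose! z hz using hV
  let v : Fin V.card → Fin k → ℤ := fun j => z (E.symm j).1
  have hv : ∀ j i, (v j i : ℝ) = (E.symm j).1 i := fun j i => (hz _ (E.symm j).2 i).symm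
  refine coeff_evPoly v _ fun n a => ?_
  rw [Set.mem_ofPred_eq, Set.mem_smul_set]
  have tr : ∀ f : (Fin k → ℝ) → ℝ, ∑ j, f (E.symm j).1 = ∑ y ∈ V, f y := fun f => by
    rw [Equiv.sum_comp E.symm (fun y : V => f y.1), Finset.sum_coe_sort]
  constructor
  · rintro ⟨x, hx, hxa⟩
    obtain ⟨w, h0, h1, h2⟩ := Finset.mem_convexHull'.1 hx
    refine ⟨fun j => n * w (E.symm j).1, fun j => mul_nonneg (Nat.cast_nonneg _) (h0 _ (E.symm j).2),
      ?_, fun i => ?_⟩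
    · rw [← Finset.mul_sum, tr w, h1, mul_one]
    · simp only [hv]
      rw [tr (fun y => n * w y * y i)]
      have := congrFun hxa i
      rw [← this, ← h2]
      simp [Finset.mul_sum, mul_assoc, Finset.sum_apply]
  · rintro ⟨c, h0, h1, h2⟩
    rcases Nat.eq_zero_or_pos n with rfl | hn
    · have hc : ∀ j, c j = 0 := by
        have := (Finset.sum_eq_zero_iff_of_nonneg fun j _ => h0 j).1 (by simpa using h1)
        exact fun j => this j (Finset.mem_univ j)
      obtain ⟨y, hy⟩ := hVne
      refine ⟨y, subset_convexHull ℝ _ hy, ?_⟩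
      funext i
      rw [← h2 i]
      simp [hc]
    · have hn' : (n : ℝ) ≠ 0 := by positivity
      refine ⟨(n : ℝ)⁻¹ • fun i => (a i : ℝ), ?_, by rw [smul_smul, mul_inv_cancel₀ hn', one_smul]⟩
      refine mem_convexHull_of_exists_fintype (fun j => (n : ℝ)⁻¹ * c j) (fun j => (E.symm j).1)
        (fun j => mul_nonneg (by positivity) (h0 j)) ?_ (fun j => (E.symm j).2) ?_
      · rw [← Finset.mul_sum, h1, inv_mul_cancel₀ hn']
      · funext i
        simp only [Finset.sum_apply, Pi.smul_apply, smul_eq_mul, ← h2 i, hv, Finset.mul_sum,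
          mul_assoc]
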